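/- There exist absolute constants c > 0 and α ≥ 0 such that for all finite A, B ⊆ F_p with 2 ≤ |B| ≤ |A| ≤ p^{1/2}, one has |A+B|^{10}·|AB|⁴ ≥ c(log|B|)^{−α}·|A|⁶|B|⁹. -/

import Mathlib

open Finset Pointwise

theorem card_add_smul_mul_le {F : Type*} [CommRing F] [DecidableEq F] (A W Z : Finset F)
    {c d : F} {N : ℕ} (h : N ≤ #(c • A ∩ d • A)) :
    #(W + c • Z) * N ≤ #(W + d • A) * #(A + Z) := by
  calc #(W + c • Z) * N ≤ #(W + c • Z) * #(c • A ∩ d • A) := by gcongr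
    _ ≤ #(W + c • A ∩ d • A) * #(c • A ∩ d • A + c • Z) :=
      ruzsa_triangle_inequality_add_add_add _ _ _
    _ ≤ #(W + d • A) * #(c • A + c • Z) := by
      gcongr
      · exact inter_subset_right
      · exact inter_subset_left
    _ ≤ #(W + d • A) * #(A + Z) := by
      rw [← smul_add]
      exact Nat.mul_le_mul_left _ card_smul_finset_le

theorem exists_subset_card_add_le {G : Type*} [AddCommGroup G] [DecidableEq G] {D : Finset G}
    (B : Finset G) (hD : D.Nonempty) :
    ∃ X ⊆ D, X.Nonempty ∧ #(X + B) * #D ≤ #(D + B) * #X ∧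
      #(X + (B + B)) * #X ≤ #(X + B) ^ 2 := by
  obtain ⟨X, hX, hmin⟩ := exists_min_image (D.powerset.erase ∅)
    (fun X ↦ (#(X + B) : ℚ≥0) / #X) ⟨D, by simp [hD.ne_empty]⟩
  simp only [mem_erase, mem_powerset, ne_eq, ← nonempty_iff_ne_empty] at hX hmin
  have key : ∀ Y ⊆ D, #(X + B) * #Y ≤ #(Y + B) * #X := by
    intro Y hY
    rcases Y.eq_empty_or_nonempty with rfl | hYne
    · simp
    have := hmin Y ⟨hYne, hY⟩
    have h1 : (0 : ℚ≥0) < #X := by exact_mod_cast hX.1.card_pos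
    have h2 : (0 : ℚ≥0) < #Y := by exact_mod_cast hYne.card_pos
    rw [div_le_div_iff₀ h1 h2] at this
    exact_mod_cast this
  refine ⟨X, hX.2, hX.1, key D subset_rfl, ?_⟩
  have := pluennecke_petridis_inequality_add B (A := X) (B := B)
    fun Y hY ↦ key Y (hY.trans hX.2)
  rwa [add_comm B X, add_assoc, ← sq] at this

theorem exists_subset_card_add_add_le {G : Type*} [AddCommGroup G] [DecidableEq G]
    (A B : Finset G) :
    ∃ A' ⊆ A, #A ≤ 2 * #A' ∧ #(A' + (B + B)) * #A ≤ 4 * #(A + B) ^ 2 := by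
  rcases A.eq_empty_or_nonempty with rfl | hA
  · exact ⟨∅, by simp⟩
  obtain ⟨A', hA', hmax⟩ := exists_max_image
    {X ∈ A.powerset | #(X + (B + B)) * #A ^ 2 ≤ 4 * #(A + B) ^ 2 * #X} card ⟨∅, by simp⟩
  simp only [mem_filter, mem_powerset] at hA' hmax
  obtain ⟨hsub, hcard⟩ := hA'
  refine ⟨A', hsub, ?_, ?_⟩
  · by_contra! hlt
    have hDcard : #A ≤ 2 * #(A \ A') := by
      have := card_sdiff_add_card_eq_card hsub
      omega
    have hD : (A \ A').Nonempty := by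
      have := hA.card_pos
      exact card_pos.1 (by omega)
    obtain ⟨X, hXD, hX, h1, h2⟩ := exists_subset_card_add_le B hD
    have hdisj : Disjoint A' X := disjoint_sdiff.mono_right hXD
    have h3 : #(X + B) * #A ≤ 2 * #(A + B) * #X := by
      calc #(X + B) * #A ≤ #(X + B) * (2 * #(A \ A')) := by gcongr
        _ = 2 * (#(X + B) * #(A \ A')) := by ring
        _ ≤ 2 * (#(A \ A' + B) * #X) := by gcongr
        _ ≤ 2 * (#(A + B) * #X) := by gcongr; exact sdiff_subset
        _ = _ := by ring
    have h4 : #(X + (B + B)) * #A ^ 2 ≤ 4 * #(A + B) ^ 2 * #X := by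
      refine Nat.le_of_mul_le_mul_right ?_ hX.card_pos
      calc #(X + (B + B)) * #A ^ 2 * #X = #(X + (B + B)) * #X * #A ^ 2 := by ring
        _ ≤ #(X + B) ^ 2 * #A ^ 2 := by gcongr
        _ = (#(X + B) * #A) ^ 2 := by ring
        _ ≤ (2 * #(A + B) * #X) ^ 2 := by gcongr
        _ = _ := by ring
    have := hmax (A' ∪ X) ⟨union_subset hsub (hXD.trans sdiff_subset), ?_⟩
    · rw [card_union_of_disjoint hdisj] at this
      have := hX.card_pos
      omega
    · rw [card_union_of_disjoint hdisj, union_add, mul_add]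
      calc _ ≤ (#(A' + (B + B)) + #(X + (B + B))) * #A ^ 2 := by
            gcongr; exact card_union_le _ _
        _ ≤ _ := by rw [add_mul]; gcongr
  · refine Nat.le_of_mul_le_mul_right ?_ hA.card_pos
    calc #(A' + (B + B)) * #A * #A = #(A' + (B + B)) * #A ^ 2 := by ring
      _ ≤ 4 * #(A + B) ^ 2 * #A' := hcard
      _ ≤ _ := by gcongr

theorem exists_card_mul_le_sum_card_smul_inter_smul {F : Type*} [Field F] [DecidableEq F]
    (A : Finset F) {B : Finset F} (hB : B.Nonempty) (h0 : 0 ∉ B) :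
    ∃ b₀ ∈ B, #A ^ 2 * #B ≤ #(A * B) * ∑ b ∈ B, #(b • A ∩ b₀ • A) := by
  have hE : mulEnergy B A ≤ ∑ b₀ ∈ B, ∑ b ∈ B, #(b • A ∩ b₀ • A) := by
    rw [mulEnergy, ← sum_product', card_eq_sum_card_fiberwise (t := B ×ˢ B)
      (f := fun x ↦ (x.1.2, x.1.1))]
    · refine sum_le_sum fun x hx ↦ ?_
      rw [mem_product] at hx
      refine card_le_card_of_injOn (fun y ↦ y.1.1 * y.2.1) ?_ ?_
      · rintro ⟨⟨b, c⟩, u, v⟩ hy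
        simp only [coe_filter, mem_filter, mem_product, Set.mem_ofPred_eq] at hy
        obtain ⟨⟨⟨⟨hb, hc⟩, hu, hv⟩, he⟩, rfl⟩ := hy
        simp only [coe_inter, Set.mem_inter_iff, mem_coe]
        exact ⟨smul_mem_smul_finset hu, he ▸ smul_mem_smul_finset hv⟩
      · rintro ⟨⟨b, c⟩, u, v⟩ hy ⟨⟨b', c'⟩, u', v'⟩ hy' he
        simp only [coe_filter, mem_filter, mem_product, Set.mem_ofPred_eq] at hy hy'
        obtain ⟨⟨⟨⟨hb, hc⟩, hu, hv⟩, h1⟩, rfl⟩ := hy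
        obtain ⟨⟨⟨⟨hb', hc'⟩, hu', hv'⟩, h1'⟩, h⟩ := hy'
        simp only [Prod.mk.injEq] at h
        obtain ⟨rfl, rfl⟩ := h
        have hb0 : b' ≠ 0 := ne_of_mem_of_not_mem hb h0
        have hc0 : c' ≠ 0 := ne_of_mem_of_not_mem hc h0
        dsimp only at he
        obtain rfl : u = u' := mul_left_cancel₀ hb0 he
        obtain rfl : v = v' := mul_left_cancel₀ hc0 (h1.symm.trans h1')
        rfl
    · intro x hx
      simp only [coe_filter, mem_product, Set.mem_ofPred_eq] at hx
      simp [hx.1.1.1, hx.1.1.2]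
  have hCS : #B ^ 2 * #A ^ 2 ≤ #(B * A) * mulEnergy B A := le_card_mul_mul_mulEnergy B A
  by_contra! hlt
  have hsum := sum_lt_sum_of_nonempty hB hlt
  rw [← mul_sum, sum_const, smul_eq_mul] at hsum
  have := Nat.mul_le_mul_left #(B * A) hE
  rw [mul_comm B A] at this hCS
  nlinarith

theorem exists_sum_le_harmonic_mul {ι : Type*} {s : Finset ι} {f : ι → ℕ} {n : ℕ}
    (hf : ∀ i ∈ s, f i ≤ n) (hn : 0 < n) :
    ∃ N : ℕ, ((∑ i ∈ s, f i : ℕ) : ℚ) ≤ harmonic n * (N * #{i ∈ s | N ≤ f i}) := by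
  have hsum : ∑ i ∈ s, f i = ∑ t ∈ range n, #{i ∈ s | t + 1 ≤ f i} := by
    simp_rw [card_filter]
    rw [sum_comm]
    refine sum_congr rfl fun i hi ↦ ?_
    rw [← card_filter]
    have : {t ∈ range n | t + 1 ≤ f i} = range (f i) := by
      ext t
      have := hf i hi
      simp only [mem_filter, mem_range]
      omega
    rw [this, card_range]
  obtain ⟨t, ht, hmax⟩ := exists_max_image (range n)
    (fun t ↦ (t + 1) * #{i ∈ s | t + 1 ≤ f i}) ⟨0, by simpa⟩
  refine ⟨t + 1, ?_⟩
  rw [hsum, harmonic, sum_mul]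
  push_cast
  refine sum_le_sum fun u hu ↦ ?_
  rw [inv_mul_eq_div, le_div_iff₀ (by positivity), mul_comm]
  exact_mod_cast hmax u hu

theorem card_sq_le_card_image_mul {α β : Type*} [DecidableEq β] (s : Finset α) (f : α → β) :
    #s ^ 2 ≤ #(s.image f) * #{x ∈ s ×ˢ s | f x.1 = f x.2} := by
  calc #s ^ 2 = (∑ b ∈ s.image f, #{a ∈ s | f a = b}) ^ 2 := by
        rw [← card_eq_sum_card_image f s]
    _ ≤ #(s.image f) * ∑ b ∈ s.image f, #{a ∈ s | f a = b} ^ 2 := sq_sum_le_card_mul_sum_sq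
    _ = _ := by
      rw [card_eq_sum_card_fiberwise (s := {x ∈ s ×ˢ s | f x.1 = f x.2}) (t := s.image f)
        (f := fun x ↦ f x.1)]
      · congr 1
        refine sum_congr rfl fun b _ ↦ ?_
        rw [sq, ← card_product]
        congr 1
        ext ⟨x, y⟩
        simp only [mem_product, mem_filter]
        constructor
        · rintro ⟨⟨hx, rfl⟩, hy, h⟩
          exact ⟨⟨⟨hx, hy⟩, h.symm⟩, rfl⟩
        · rintro ⟨⟨⟨hx, hy⟩, h⟩, rfl⟩
          exact ⟨⟨hx, rfl⟩, hy, h.symm⟩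
      · intro x hx
        simp only [coe_filter, mem_product, Set.mem_ofPred_eq] at hx
        exact mem_coe.2 (mem_image_of_mem f hx.1.1)

theorem add_smul_eq_image {F : Type*} [Field F] [DecidableEq F] (B : Finset F) (r : F) :
    B + r • B = (B ×ˢ B).image fun x ↦ x.1 + r * x.2 := by
  ext z
  simp only [mem_add, mem_smul_finset, mem_image, mem_product, Prod.exists, smul_eq_mul]
  constructor
  · rintro ⟨x, hx, _, ⟨y, hy, rfl⟩, rfl⟩
    exact ⟨x, y, ⟨hx, hy⟩, rfl⟩
  · rintro ⟨x, y, ⟨hx, hy⟩, rfl⟩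
    exact ⟨x, hx, _, ⟨y, hy, rfl⟩, rfl⟩

theorem exists_card_sq_le_two_mul_card_add_smul {F : Type*} [Field F] [Fintype F]
    [DecidableEq F] {B : Finset F} (hB : #B ^ 2 ≤ Fintype.card F) :
    ∃ r : F, #B ^ 2 ≤ 2 * #(B + r • B) := by
  rcases B.eq_empty_or_nonempty with rfl | hne
  · exact ⟨0, by simp⟩
  let f : F → F × F → F := fun r x ↦ x.1 + r * x.2
  let S := B ×ˢ B
  have hS : #S = #B ^ 2 := by rw [card_product, sq]
  have hcount : ∑ r : F, #{x ∈ S ×ˢ S | f r x.1 = f r x.2} ≤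
      ∑ _r : F, 2 * #B ^ 2 := by
    simp_rw [card_filter]
    rw [sum_comm]
    calc ∑ x ∈ S ×ˢ S, ∑ r : F, (if f r x.1 = f r x.2 then 1 else 0)
        ≤ ∑ x ∈ S ×ˢ S, ((if x.1 = x.2 then Fintype.card F else 0) + 1) := by
          refine sum_le_sum fun x _ ↦ ?_
          rw [← card_filter]
          split_ifs with h
          · exact (card_le_univ _).trans (Nat.le_succ _)
          · rw [zero_add, card_le_one]
            intro r hr r' hr'
            simp only [mem_filter, mem_univ, true_and, f] at hr hr'
            have hmul : (r - r') * (x.1.2 - x.2.2) = 0 := by linear_combination hr - hr'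
            rcases mul_eq_zero.1 hmul with h1 | h1
            · exact sub_eq_zero.1 h1
            · have h2 := sub_eq_zero.1 h1
              rw [h2] at hr
              exact absurd (Prod.ext (add_right_cancel hr) h2) h
      _ = Fintype.card F * #B ^ 2 + #B ^ 2 * #B ^ 2 := by
          rw [sum_add_distrib, ← card_eq_sum_ones, card_product, hS, sum_product]
          simp only [sum_ite_eq]
          rw [sum_congr rfl fun x hx ↦ if_pos hx, sum_const, hS, smul_eq_mul, mul_comm]
      _ ≤ _ := by
          rw [sum_const, card_univ, smul_eq_mul]
          nlinarith
  obtain ⟨r, -, hr⟩ := exists_le_of_sum_le univ_nonempty hcount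
  refine ⟨r, ?_⟩
  have := card_sq_le_card_image_mul S (f r)
  rw [← add_smul_eq_image, hS] at this
  have hpos : 0 < #B ^ 2 := by have := hne.card_pos; positivity
  refine Nat.le_of_mul_le_mul_right ?_ hpos
  calc #B ^ 2 * #B ^ 2 = (#B ^ 2) ^ 2 := by ring
    _ ≤ _ := this
    _ ≤ #(B + r • B) * (2 * #B ^ 2) := by gcongr
    _ = _ := by ring

theorem exists_card_sq_le_two_mul_card_smul_add_smul {p : ℕ} [Fact p.Prime]
    {B : Finset (ZMod p)} (hne : B.Nonempty) (hB : #B ^ 2 ≤ p) :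
    ∃ b₁ ∈ B, ∃ b₂ ∈ B, ∃ b₃ ∈ B, ∃ b₄ ∈ B,
      #B ^ 2 ≤ 2 * #((b₁ - b₂) • B + (b₃ - b₄) • (B + B)) := by
  rcases lt_or_ge 1 #B with h1 | h1
  swap
  · obtain ⟨b, hb⟩ := hne
    refine ⟨b, hb, b, hb, b, hb, b, hb, ?_⟩
    have hpos : 0 < #((b - b) • B + (b - b) • (B + B)) := by
      rw [card_pos]
      have : B.Nonempty := ⟨b, hb⟩
      exact this.smul_finset.add (this.add this).smul_finset
    nlinarith
  let R : ZMod p → Prop := fun s ↦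
    ∃ b₁ ∈ B, ∃ b₂ ∈ B, ∃ b₃ ∈ B, ∃ b₄ ∈ B, b₃ ≠ b₄ ∧ s * (b₃ - b₄) = b₁ - b₂
  obtain ⟨s, ⟨b₁, h₁, b₂, h₂, b₃, h₃, b₄, h₄, hne, hs⟩, hcard⟩ :
      ∃ s, R s ∧ #B ^ 2 ≤ 2 * #(B + (s + 1) • B) := by
    by_cases hstep : ∀ s, R s → R (s + 1)
    · have hnat : ∀ n : ℕ, R n := by
        intro n
        induction n with
        | zero =>
          obtain ⟨x, hx, y, hy, hxy⟩ := one_lt_card.1 h1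
          exact ⟨x, hx, x, hx, x, hx, y, hy, hxy, by simp⟩
        | succ n ih => exact_mod_cast hstep _ ih
      obtain ⟨r, hr⟩ := exists_card_sq_le_two_mul_card_add_smul (F := ZMod p) (B := B)
        (by rwa [ZMod.card])
      obtain ⟨n, hn⟩ := ZMod.natCast_zmod_surjective (r - 1)
      exact ⟨r - 1, hn ▸ hnat n, by rwa [sub_add_cancel]⟩
    · push Not at hstep
      obtain ⟨s, hs, hs'⟩ := hstep
      refine ⟨s, hs, ?_⟩
      rw [add_smul_eq_image, card_image_of_injOn, card_product]
      · nlinarith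
      · rintro ⟨x, y⟩ hx ⟨x', y'⟩ hx' h
        simp only [coe_product, Set.mem_prod, mem_coe] at hx hx' h
        have hy : y = y' := by
          by_contra hy
          exact hs' ⟨x', hx'.1, x, hx.1, y, hx.2, y', hx'.2, hy, by linear_combination h⟩
        subst hy
        rw [add_right_cancel h]
  refine ⟨b₁, h₁, b₂, h₂, b₃, h₃, b₄, h₄, hcard.trans ?_⟩
  gcongr 2 * ?_
  rw [← card_smul_finset₀ (sub_ne_zero.2 hne)]
  refine card_le_card fun z hz ↦ ?_
  simp only [mem_add, mem_smul_finset, smul_eq_mul] at hz ⊢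
  obtain ⟨_, ⟨x, hx, _, ⟨y, hy, rfl⟩, rfl⟩, rfl⟩ := hz
  exact ⟨_, ⟨y, hy, rfl⟩, _, ⟨_, ⟨x, hx, y, hy, rfl⟩, rfl⟩, by linear_combination -y * hs⟩

theorem card_smul_add_smul_mul_pow_le {F : Type*} [Field F] [DecidableEq F] {A B C : Finset F}
    {b₀ b₁ b₂ b₃ b₄ : F} {N : ℕ} (hCB : C ⊆ B) (hN : ∀ b ∈ C, N ≤ #(b • A ∩ b₀ • A))
    (h₁ : b₁ ∈ C) (h₂ : b₂ ∈ C) (h₃ : b₃ ∈ C) (h₄ : b₄ ∈ C) :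
    #((b₁ - b₂) • C + (b₃ - b₄) • (C + C)) * N ^ 4 ≤
      #(A + B) ^ 2 * #(A + (B + B)) ^ 2 * #(A + A - (A + A)) := by
  have hneg : ∀ b ∈ C, N ≤ #((-b) • A ∩ (-b₀) • A) := by
    intro b hb
    convert hN b hb using 1
    rw [← card_neg]
    congr 1
    ext x
    simp [mem_smul_finset]
  have hsub : ∀ (b b' : F) (Z : Finset F), (b - b') • Z ⊆ b • Z + (-b') • Z := by
    intro b b' Z z hz
    obtain ⟨x, hx, rfl⟩ := mem_smul_finset.1 hz
    rw [sub_eq_add_neg, add_smul]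
    exact add_mem_add (smul_mem_smul_finset hx) (smul_mem_smul_finset hx)
  have hfin : #((-b₀) • A + (-b₀) • A + b₀ • A + b₀ • A) ≤ #(A + A - (A + A)) := by
    have : (-b₀) • A + (-b₀) • A + b₀ • A + b₀ • A = b₀ • (A + A - (A + A)) := by
      have hA : b₀ • -(A + A) = (-b₀) • (A + A) := by
        ext x
        simp
      rw [sub_eq_add_neg, smul_add, hA, smul_add, smul_add]
      abel
    rw [this]
    exact card_smul_finset_le
  set K := #(A + C)
  set D := #(A + (C + C))
  have e₁ : #(b₁ • C + (-b₂) • C + b₃ • (C + C) + (-b₄) • (C + C)) * N ≤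
      #(b₁ • C + (-b₂) • C + (-b₀) • A + b₃ • (C + C)) * D := by
    rw [add_right_comm (b₁ • C + (-b₂) • C) ((-b₀) • A)]
    exact card_add_smul_mul_le A _ _ (hneg b₄ h₄)
  have e₂ : #(b₁ • C + (-b₂) • C + (-b₀) • A + b₃ • (C + C)) * N ≤
      #(b₁ • C + (-b₀) • A + b₀ • A + (-b₂) • C) * D := by
    rw [show b₁ • C + (-b₀) • A + b₀ • A + (-b₂) • C =
      b₁ • C + (-b₂) • C + (-b₀) • A + b₀ • A by abel]
    exact card_add_smul_mul_le A _ _ (hN b₃ h₃)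
  have e₃ : #(b₁ • C + (-b₀) • A + b₀ • A + (-b₂) • C) * N ≤
      #((-b₀) • A + (-b₀) • A + b₀ • A + b₁ • C) * K := by
    rw [show (-b₀) • A + (-b₀) • A + b₀ • A + b₁ • C =
      b₁ • C + (-b₀) • A + b₀ • A + (-b₀) • A by abel]
    exact card_add_smul_mul_le A _ _ (hneg b₂ h₂)
  have e₄ : #((-b₀) • A + (-b₀) • A + b₀ • A + b₁ • C) * N ≤ #(A + A - (A + A)) * K :=
    (card_add_smul_mul_le A _ _ (hN b₁ h₁)).trans (by gcongr)
  calc #((b₁ - b₂) • C + (b₃ - b₄) • (C + C)) * N ^ 4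
      ≤ #(b₁ • C + (-b₂) • C + b₃ • (C + C) + (-b₄) • (C + C)) * N ^ 4 := by
        rw [add_assoc (b₁ • C + (-b₂) • C)]
        refine Nat.mul_le_mul_right _ (card_le_card ?_)
        exact add_subset_add (hsub b₁ b₂ C) (hsub b₃ b₄ (C + C))
    _ = #(b₁ • C + (-b₂) • C + b₃ • (C + C) + (-b₄) • (C + C)) * N * N ^ 3 := by ring
    _ ≤ #(b₁ • C + (-b₂) • C + (-b₀) • A + b₃ • (C + C)) * D * N ^ 3 := by gcongr
    _ = #(b₁ • C + (-b₂) • C + (-b₀) • A + b₃ • (C + C)) * N * (D * N ^ 2) := by ring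
    _ ≤ #(b₁ • C + (-b₀) • A + b₀ • A + (-b₂) • C) * D * (D * N ^ 2) := by gcongr
    _ = #(b₁ • C + (-b₀) • A + b₀ • A + (-b₂) • C) * N * (D ^ 2 * N) := by ring
    _ ≤ #((-b₀) • A + (-b₀) • A + b₀ • A + b₁ • C) * K * (D ^ 2 * N) := by gcongr
    _ = #((-b₀) • A + (-b₀) • A + b₀ • A + b₁ • C) * N * (K * D ^ 2) := by ring
    _ ≤ #(A + A - (A + A)) * K * (K * D ^ 2) := by gcongr
    _ = #(A + C) ^ 2 * #(A + (C + C)) ^ 2 * #(A + A - (A + A)) := by ring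
    _ ≤ _ := by gcongr

theorem card_add_sub_add_mul_le {G : Type*} [AddCommGroup G] [DecidableEq G]
    (A : Finset G) {B : Finset G} (hB : B.Nonempty) :
    #(A + A - (A + A)) * #B ^ 3 ≤ #(A + B) ^ 4 := by
  have h := pluennecke_ruzsa_inequality_nsmul_sub_nsmul_add hB A 2 2
  simp only [two_nsmul] at h
  rw [add_comm B A] at h
  have hpos : (0 : ℚ≥0) < #B := by exact_mod_cast hB.card_pos
  have : (#(A + A - (A + A)) : ℚ≥0) * #B ^ 3 ≤ #(A + B) ^ 4 := by
    calc (#(A + A - (A + A)) : ℚ≥0) * #B ^ 3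
        ≤ (#(A + B) / #B : ℚ≥0) ^ (2 + 2) * #B * #B ^ 3 := by gcongr
      _ = _ := by rw [div_pow]; field_simp; ring
  exact_mod_cast this

theorem card_pow_mul_card_pow_le {p : ℕ} [Fact p.Prime] {A B : Finset (ZMod p)}
    (hB : 2 ≤ #B) (hBA : #B ≤ #A) (hA : #A ^ 2 ≤ p) :
    (#A : ℚ) ^ 10 * #B ^ 5 ≤ 2 ^ 17 * harmonic #A ^ 4 * #(A + B) ^ 10 * #(A * B) ^ 4 := by
  obtain ⟨A', hA'A, hA', hD⟩ := exists_subset_card_add_add_le A B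
  have hBpos : 0 < #B := by omega
  have hApos : 0 < #A := by omega
  set B' := B.erase 0
  have hB'B : B' ⊆ B := erase_subset _ _
  have hB'card : #B ≤ 2 * #B' := by
    have : #B - 1 ≤ #B' := pred_card_le_card_erase
    omega
  have hB'ne : B'.Nonempty := card_pos.1 (by omega)
  obtain ⟨b₀, hb₀, hsum⟩ := exists_card_mul_le_sum_card_smul_inter_smul A' hB'ne
    (notMem_erase 0 B)
  obtain ⟨N, hlevel⟩ := exists_sum_le_harmonic_mul (s := B')
    (f := fun b ↦ #(b • A' ∩ b₀ • A')) (n := #A)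
    (fun b _ ↦ (card_le_card inter_subset_left).trans
      (card_smul_finset_le.trans (card_le_card hA'A))) hApos
  set C := {b ∈ B' | N ≤ #(b • A' ∩ b₀ • A')}
  have hCB : C ⊆ B := (filter_subset _ _).trans hB'B
  have hlow : (#A : ℚ) ^ 2 * #B ≤ 8 * #(A * B) * harmonic #A * (N * #C) := by
    have h1 : (#A : ℚ) ≤ 2 * #A' := by exact_mod_cast hA'
    have h2 : (#B : ℚ) ≤ 2 * #B' := by exact_mod_cast hB'card
    have h3 : (#(A' * B') : ℚ) ≤ #(A * B) := by
      exact_mod_cast card_le_card (mul_subset_mul hA'A hB'B)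
    calc (#A : ℚ) ^ 2 * #B ≤ (2 * #A') ^ 2 * (2 * #B') := by gcongr
      _ = 8 * ((#A' : ℚ) ^ 2 * #B') := by ring
      _ ≤ 8 * ((#(A' * B') : ℚ) * (∑ b ∈ B', #(b • A' ∩ b₀ • A') : ℕ)) := by
        gcongr 8 * ?_
        exact_mod_cast hsum
      _ ≤ 8 * ((#(A * B) : ℚ) * (harmonic #A * (N * #C))) := by gcongr
      _ = _ := by ring
  have hC : C.Nonempty := by
    rw [nonempty_iff_ne_empty]
    intro h
    rw [h] at hlow
    simp only [card_empty, Nat.cast_zero, mul_zero] at hlow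
    have : (0 : ℚ) < #A ^ 2 * #B := by positivity
    linarith
  have hCcard : #C ≤ #B := card_le_card hCB
  obtain ⟨b₁, h₁, b₂, h₂, b₃, h₃, b₄, h₄, hS⟩ :=
    exists_card_sq_le_two_mul_card_smul_add_smul hC
      ((Nat.pow_le_pow_left (hCcard.trans hBA) 2).trans hA)
  have hT := card_smul_add_smul_mul_pow_le hCB (fun b hb ↦ (mem_filter.1 hb).2) h₁ h₂ h₃ h₄
  have hQ := card_add_sub_add_mul_le A' (card_pos.1 hBpos)
  have hK : #(A' + B) ≤ #(A + B) := card_le_card (add_subset_add_right hA'A)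
  have hup : (N * #C) ^ 4 * (#A ^ 2 * #B) ≤ 32 * #(A + B) ^ 10 := by
    refine Nat.le_of_mul_le_mul_right ?_ (pow_pos hBpos 2)
    calc (N * #C) ^ 4 * (#A ^ 2 * #B) * #B ^ 2
        = #C ^ 2 * (#C ^ 2 * N ^ 4) * (#A ^ 2 * #B ^ 3) := by ring
      _ ≤ #B ^ 2 * (2 * #((b₁ - b₂) • C + (b₃ - b₄) • (C + C)) * N ^ 4) *
          (#A ^ 2 * #B ^ 3) := by gcongr
      _ = 2 * #B ^ 2 * (#((b₁ - b₂) • C + (b₃ - b₄) • (C + C)) * N ^ 4) *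
          (#A ^ 2 * #B ^ 3) := by ring
      _ ≤ 2 * #B ^ 2 * (#(A' + B) ^ 2 * #(A' + (B + B)) ^ 2 * #(A' + A' - (A' + A'))) *
          (#A ^ 2 * #B ^ 3) := by gcongr
      _ = 2 * #B ^ 2 * #(A' + B) ^ 2 * (#(A' + (B + B)) * #A) ^ 2 *
          (#(A' + A' - (A' + A')) * #B ^ 3) := by ring
      _ ≤ 2 * #B ^ 2 * #(A + B) ^ 2 * (4 * #(A + B) ^ 2) ^ 2 * #(A + B) ^ 4 := by
        gcongr
        exact hQ.trans (by gcongr)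
      _ = _ := by ring
  have hup' : ((N * #C : ℚ)) ^ 4 * (#A ^ 2 * #B) ≤ 32 * #(A + B) ^ 10 := by exact_mod_cast hup
  have hH : 0 ≤ harmonic #A := (harmonic_pos hApos.ne').le
  calc (#A : ℚ) ^ 10 * #B ^ 5 = (#A ^ 2 * #B) ^ 4 * (#A ^ 2 * #B) := by ring
    _ ≤ (8 * #(A * B) * harmonic #A * (N * #C)) ^ 4 * (#A ^ 2 * #B) := by gcongr
    _ = 8 ^ 4 * #(A * B) ^ 4 * harmonic #A ^ 4 * ((N * #C) ^ 4 * (#A ^ 2 * #B)) := by ring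
    _ ≤ 8 ^ 4 * #(A * B) ^ 4 * harmonic #A ^ 4 * (32 * #(A + B) ^ 10) := by gcongr
    _ = _ := by ring

theorem different_sets_key :
    ∃ c α : ℝ, 0 < c ∧ 0 ≤ α ∧ ∀ (p : ℕ), p.Prime → ∀ A B : Finset (ZMod p),
      2 ≤ B.card → B.card ≤ A.card → (A.card : ℝ) ≤ Real.sqrt p →
      c * (Real.log (B.card : ℝ)) ^ (-α) * (A.card : ℝ) ^ 6 * (B.card : ℝ) ^ 9 ≤
        ((A + B).card : ℝ) ^ 10 * ((A * B).card : ℝ) ^ 4 := by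
  refine ⟨1 / 2 ^ 25, 4, by norm_num, by norm_num, fun p hp A B hB hBA hA ↦ ?_⟩
  have : Fact p.Prime := ⟨hp⟩
  have hB2 : (2 : ℝ) ≤ #B := by exact_mod_cast hB
  have hBA' : (#B : ℝ) ≤ #A := by exact_mod_cast hBA
  have hlog : 1 / 2 < Real.log #B :=
    lt_of_lt_of_le (by linarith [Real.log_two_gt_d9]) (Real.log_le_log (by norm_num) hB2)
  have hlogpos : 0 < Real.log #B := by linarith
  rw [Real.rpow_neg hlogpos.le, show (4 : ℝ) = (4 : ℕ) by norm_num, Real.rpow_natCast]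
  suffices h : (#A : ℝ) ^ 6 * (#B : ℝ) ^ 9 ≤
      2 ^ 25 * Real.log #B ^ 4 * (#(A + B) ^ 10 * #(A * B) ^ 4) by
    calc _ = (#A : ℝ) ^ 6 * (#B : ℝ) ^ 9 / (2 ^ 25 * Real.log #B ^ 4) := by field_simp
      _ ≤ _ := by rw [div_le_iff₀ (by positivity)]; linarith
  rcases le_or_gt (#B ^ 2) #A with hlarge | hsmall
  · have hlarge' : (#B : ℝ) ^ 2 ≤ #A := by exact_mod_cast hlarge
    have hK : (#A : ℝ) ≤ #(A + B) := by
      exact_mod_cast card_le_card_add_right (card_pos.1 (by omega : 0 < #B))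
    have hP : (#A : ℝ) ≤ #(A * B) := by
      obtain ⟨b, hb, hb0⟩ := exists_mem_ne (by omega : 1 < #B) 0
      exact_mod_cast card_le_card_mul_right₀ hb hb0
    have hL : (1 : ℝ) ≤ 2 ^ 25 * Real.log #B ^ 4 := by
      have : (1 / 2 : ℝ) ^ 4 ≤ Real.log #B ^ 4 := by gcongr
      linarith
    have h1 : (1 : ℝ) ≤ #A := by linarith
    calc (#A : ℝ) ^ 6 * (#B : ℝ) ^ 9 ≤ (#A : ℝ) ^ 6 * (#A : ℝ) ^ 8 := by
          gcongr
          calc (#B : ℝ) ^ 9 = (#B ^ 2) ^ 4 * #B := by ring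
            _ ≤ (#A : ℝ) ^ 4 * #A := by gcongr
            _ = (#A : ℝ) ^ 5 := by ring
            _ ≤ (#A : ℝ) ^ 8 := by gcongr; norm_num
      _ = 1 * ((#A : ℝ) ^ 10 * (#A : ℝ) ^ 4) := by ring
      _ ≤ _ := by gcongr
  · have hsmall' : (#A : ℝ) ≤ #B ^ 2 := by exact_mod_cast hsmall.le
    have hp' : #A ^ 2 ≤ p := by
      have := (Real.le_sqrt' (by linarith)).1 hA
      exact_mod_cast this
    have hmain : (#A : ℝ) ^ 10 * #B ^ 5 ≤
        2 ^ 17 * (harmonic #A : ℝ) ^ 4 * #(A + B) ^ 10 * #(A * B) ^ 4 := by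
      exact_mod_cast card_pow_mul_card_pow_le hB hBA hp'
    have hH : (harmonic #A : ℝ) ≤ 4 * Real.log #B := by
      have h1 := harmonic_le_one_add_log #A
      have h2 : Real.log #A ≤ 2 * Real.log #B := by
        rw [← Real.log_rpow (by linarith)]
        refine Real.log_le_log (by linarith) ?_
        exact_mod_cast hsmall'
      linarith
    have hH0 : (0 : ℝ) ≤ harmonic #A := by
      exact_mod_cast (harmonic_pos (by omega : #A ≠ 0)).le
    calc (#A : ℝ) ^ 6 * (#B : ℝ) ^ 9 = (#A : ℝ) ^ 6 * (#B : ℝ) ^ 5 * (#B : ℝ) ^ 4 := by ring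
      _ ≤ (#A : ℝ) ^ 6 * (#B : ℝ) ^ 5 * (#A : ℝ) ^ 4 := by gcongr
      _ = (#A : ℝ) ^ 10 * (#B : ℝ) ^ 5 := by ring
      _ ≤ _ := hmain
      _ ≤ 2 ^ 17 * (4 * Real.log #B) ^ 4 * #(A + B) ^ 10 * #(A * B) ^ 4 := by gcongr
      _ = _ := by ring
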